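/- Let Q° be a Dynkin quiver with vertex set I°. Then there is no nonzero vector α ∈ ℤ^{I°} such that −1 ≤ (α,η) ≤ 0 for all positive roots η of Q°. -/

import Mathlib

open scoped BigOperators

noncomputable section

/-- A quiver with a finite vertex set `I` and a finite arrow set `A`;
`h a` and `t a` are the head and the tail of the arrow `a`. -/
structure FinQuiver where
  I : Type
  [fintypeI : Fintype I]
  [decEqI : DecidableEq I]
  A : Type
  [fintypeA : Fintype A]
  h : A → I
  t : A → I

attribute [instance] FinQuiver.fintypeI FinQuiver.decEqI FinQuiver.fintypeA

namespace FinQuiver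

variable (Q : FinQuiver)

/-- Arrows of the double quiver `Q̄` : every arrow `a : i → j` of `Q` (as `Sum.inl a`)
together with a reverse arrow `a* : j → i` (as `Sum.inr a`). -/
@[reducible] def DA : Type := Q.A ⊕ Q.A

instance : Fintype Q.DA := inferInstanceAs (Fintype (Q.A ⊕ Q.A))

/-- Head of an arrow of the double quiver. -/
@[reducible] def dh : Q.DA → Q.I := fun a => match a with
  | Sum.inl a => Q.h a
  | Sum.inr a => Q.t a

/-- Tail of an arrow of the double quiver. -/
@[reducible] def dt : Q.DA → Q.I := fun a => match a with
  | Sum.inl a => Q.t a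
  | Sum.inr a => Q.h a

/-- The symmetric bilinear form
`(α,β) = ∑_{i∈I} 2 α_i β_i − ∑_{a∈Q̄} α_{h(a)} β_{t(a)}` on `ℤ^I`. -/
def bil (α β : Q.I → ℤ) : ℤ :=
  (∑ i, 2 * α i * β i) - ∑ a : Q.DA, α (Q.dh a) * β (Q.dt a)

/-- `p(α) = 1 − q(α) = 1 − α·α + ∑_{a ∈ Q} α_{t(a)} α_{h(a)}`. -/
def pp (α : Q.I → ℤ) : ℤ :=
  1 - (∑ i, α i * α i) + ∑ a : Q.A, α (Q.t a) * α (Q.h a)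

/-- The coordinate vector `ε_i` at a vertex `i`. -/
def ev (i : Q.I) : Q.I → ℤ := fun j => if j = i then 1 else 0

/-- The coordinate vector of a vertex, as a vector of natural numbers. -/
def evN (i : Q.I) : Q.I → ℕ := fun j => if j = i then 1 else 0

/-- A vertex is loopfree if no arrow has both its head and its tail there. -/
def Loopfree (i : Q.I) : Prop := ∀ a : Q.A, ¬ (Q.h a = i ∧ Q.t a = i)

/-- The reflection `s_i(α) = α − (α,ε_i) ε_i` at a (loopfree) vertex `i`. -/
def refl (i : Q.I) (α : Q.I → ℤ) : Q.I → ℤ := α - Q.bil α (Q.ev i) • Q.ev i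

/-- Two vertices are joined by some arrow. -/
def Adj (i j : Q.I) : Prop :=
  ∃ a : Q.A, (Q.h a = i ∧ Q.t a = j) ∨ (Q.h a = j ∧ Q.t a = i)

/-- The quiver is connected. -/
def Connected : Prop := ∀ i j : Q.I, Relation.ReflTransGen Q.Adj i j

/-- The support of the vector `α` is connected in `Q`. -/
def SuppConnected (α : Q.I → ℤ) : Prop :=
  ∀ i j : Q.I, α i ≠ 0 → α j ≠ 0 →
    Relation.ReflTransGen (fun x y => α x ≠ 0 ∧ α y ≠ 0 ∧ Q.Adj x y) i j

/-- The fundamental region: nonzero nonnegative vectors with connected support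
such that `(α, ε_i) ≤ 0` for every vertex `i`. -/
def InFund (α : Q.I → ℤ) : Prop :=
  α ≠ 0 ∧ (∀ i, 0 ≤ α i) ∧ Q.SuppConnected α ∧ ∀ i, Q.bil α (Q.ev i) ≤ 0

/-- The roots of the Kac root system attached to `Q` : the real roots form the orbit
of the simple roots (coordinate vectors at loopfree vertices) under the reflections at
loopfree vertices, and the imaginary roots form the orbit of `±(fundamental region)`
under these reflections. -/
inductive IsRoot : (Q.I → ℤ) → Prop
  | simple (i : Q.I) (hi : Q.Loopfree i) : IsRoot (Q.ev i)
  | fund (α : Q.I → ℤ) (hα : Q.InFund α) : IsRoot α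
  | neg_fund (α : Q.I → ℤ) (hα : Q.InFund α) : IsRoot (-α)
  | reflect (i : Q.I) (hi : Q.Loopfree i) (α : Q.I → ℤ) (hα : IsRoot α) :
      IsRoot (Q.refl i α)

/-- Positive roots: roots all of whose components are nonnegative. -/
def IsPosRoot (α : Q.I → ℤ) : Prop := Q.IsRoot α ∧ (∀ i, 0 ≤ α i) ∧ α ≠ 0

/-- The Tits form is positive semidefinite. -/
def PosSemidef : Prop := ∀ α : Q.I → ℤ, 0 ≤ Q.bil α α

/-- The Tits form is positive definite. -/
def PosDef : Prop := Q.PosSemidef ∧ ∀ α : Q.I → ℤ, Q.bil α α = 0 → α = 0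

/-- Dynkin quivers: connected, with positive definite Tits form. -/
def IsDynkin : Prop := Q.Connected ∧ Q.PosDef

/-- Extended Dynkin quivers: connected, with positive semidefinite but not
positive definite Tits form. -/
def IsExtDynkin : Prop := Q.Connected ∧ Q.PosSemidef ∧ ¬ Q.PosDef

/-- `δ` is the minimal positive imaginary root of an extended Dynkin quiver:
the minimal nonzero nonnegative vector in the radical of the Tits form. -/
def IsMinImag (δ : Q.I → ℤ) : Prop :=
  (∀ i, 0 ≤ δ i) ∧ δ ≠ 0 ∧ (∀ i, Q.bil δ (Q.ev i) = 0) ∧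
    ∀ β : Q.I → ℤ, (∀ i, 0 ≤ β i) → β ≠ 0 → (∀ i, Q.bil β (Q.ev i) = 0) →
      ∀ i, δ i ≤ β i

/-- The subquiver of `Q` on a subset `S` of vertices and a subset `B` of arrows. -/
def restrict (S : Set Q.I) (B : Set Q.A) (hh : ∀ a ∈ B, Q.h a ∈ S)
    (ht : ∀ a ∈ B, Q.t a ∈ S) : FinQuiver :=
  { I := S
    fintypeI := Fintype.ofFinite S
    decEqI := Classical.decEq _
    A := B
    fintypeA := Fintype.ofFinite B
    h := fun a => ⟨Q.h a.1, hh a.1 a.2⟩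
    t := fun a => ⟨Q.t a.1, ht a.1 a.2⟩ }

/-- The support quiver of a vector: the full subquiver on the support of `β`. -/
def suppQuiver (β : Q.I → ℤ) : FinQuiver :=
  Q.restrict {i | β i ≠ 0} {a | β (Q.h a) ≠ 0 ∧ β (Q.t a) ≠ 0}
    (fun _ ha => ha.1) (fun _ ha => ha.2)

/-- A dimension vector (of natural numbers), viewed in `ℤ^I`. -/
def toZ (α : Q.I → ℕ) : Q.I → ℤ := fun i => (α i : ℤ)

/-- An oriented cycle in the double quiver `Q̄`, consisting of `n+1` arrows,
the tail of each arrow being the head of the (cyclically) next one. -/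
structure Cyc (Q' : FinQuiver) where
  n : ℕ
  ar : Fin (n + 1) → Q'.DA
  compat : ∀ i : Fin (n + 1), Q'.dt (ar i) = Q'.dh (ar (i + 1))

section WithField

variable (K : Type) [Field K]

/-- `λ·α = ∑_i λ_i α_i`. -/
def pair (l : Q.I → K) (α : Q.I → ℤ) : K := ∑ i, l i * (α i : K)

/-- `R_λ^+`, the set of positive roots `α` with `λ·α = 0`. -/
def Rplus (l : Q.I → K) : Set (Q.I → ℤ) :=
  {α | Q.IsPosRoot α ∧ Q.pair K l α = 0}

/-- `ℕ R_λ^+`, the set of sums (including the empty sum `0`) of elements of `R_λ^+`. -/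
def NRplus (l : Q.I → K) : Set (Q.I → ℤ) :=
  (AddSubmonoid.closure (Q.Rplus K l) : AddSubmonoid (Q.I → ℤ))

/-- `Σ_λ` : the elements `α ∈ R_λ^+` with `p(α) > ∑ p(β⁽ᵗ⁾)` for every decomposition
of `α` as a sum of at least two elements `β⁽ᵗ⁾` of `R_λ^+`. -/
def SigmaSet (l : Q.I → K) : Set (Q.I → ℤ) :=
  {α | α ∈ Q.Rplus K l ∧
    ∀ (n : ℕ) (β : Fin n → (Q.I → ℤ)), 2 ≤ n → (∀ j, β j ∈ Q.Rplus K l) →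
      α = ∑ j, β j → (∑ j, Q.pp (β j)) < Q.pp α}

/-- The dual reflection `r_i(λ)_j = λ_j − (ε_i,ε_j) λ_i`. -/
def coRefl (i : Q.I) (l : Q.I → K) : Q.I → K :=
  fun j => l j - (Q.bil (Q.ev i) (Q.ev j) : ℤ) * l i

/-- A single admissible reflection applied to the pair `(λ, α)`:
a reflection at a loopfree vertex `i` with `λ_i ≠ 0`. -/
def AdmStep (x y : (Q.I → K) × (Q.I → ℤ)) : Prop :=
  ∃ i : Q.I, Q.Loopfree i ∧ x.1 i ≠ 0 ∧ y.1 = Q.coRefl K i x.1 ∧ y.2 = Q.refl i x.2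

/-- `(ν,β)` is obtained from `(λ,α)` by a sequence of admissible reflections:
the two pairs lie in the same class of the equivalence relation generated by
admissible reflections. -/
def AdmEquiv (x y : (Q.I → K) × (Q.I → ℤ)) : Prop :=
  Relation.EqvGen (Q.AdmStep K) x y

/-- The space `Rep(Q̄,α)` of representations of the double quiver. -/
def Rep (α : Q.I → ℕ) : Type :=
  ∀ a : Q.DA, Matrix (Fin (α (Q.dh a))) (Fin (α (Q.dt a))) K

/-- The moment map
`μ_α(x)_i = ∑_{a∈Q, h(a)=i} x_a x_{a*} − ∑_{a∈Q, t(a)=i} x_{a*} x_a`. -/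
def moment (α : Q.I → ℕ) (x : Q.Rep K α) (i : Q.I) :
    Matrix (Fin (α i)) (Fin (α i)) K :=
  (∑ a : Q.A, if h : Q.h a = i then
      (x (Sum.inl a) * x (Sum.inr a)).submatrix
        (Fin.cast (congrArg α h).symm) (Fin.cast (congrArg α h).symm)
    else 0)
  - ∑ a : Q.A, if h : Q.t a = i then
      (x (Sum.inr a) * x (Sum.inl a)).submatrix
        (Fin.cast (congrArg α h).symm) (Fin.cast (congrArg α h).symm)
    else 0

/-- The fibre `μ_α^{-1}(λ)` of the moment map over (the central element
corresponding to) `λ`. -/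
def MomentFiber (l : Q.I → K) (α : Q.I → ℕ) : Set (Q.Rep K α) :=
  {x | ∀ i : Q.I, Q.moment K α x i = l i • (1 : Matrix (Fin (α i)) (Fin (α i)) K)}

/-- The group `∏_i GL(α_i,K)`; it acts on `Rep(Q̄,α)` by conjugation, with the same
orbits and the same invariant functions as `G(α) = (∏_i GL(α_i,K))/K^*`. -/
def Gl (α : Q.I → ℕ) : Type := ∀ i : Q.I, Matrix.GeneralLinearGroup (Fin (α i)) K

/-- The conjugation action of `∏_i GL(α_i,K)` on `Rep(Q̄,α)`. -/
def glAct (α : Q.I → ℕ) (g : Q.Gl K α) (x : Q.Rep K α) : Q.Rep K α :=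
  fun a => (g (Q.dh a) : Matrix (Fin (α (Q.dh a))) (Fin (α (Q.dh a))) K) * x a *
    (((g (Q.dt a))⁻¹ : Matrix.GeneralLinearGroup (Fin (α (Q.dt a))) K) :
      Matrix (Fin (α (Q.dt a))) (Fin (α (Q.dt a))) K)

/-- Coordinates on `Rep(Q̄,α)`: matrix entries. -/
def Coords (α : Q.I → ℕ) : Type :=
  Σ a : Q.DA, Fin (α (Q.dh a)) × Fin (α (Q.dt a))

/-- The coordinate ring `K[V]` of a subset `V` of `Rep(Q̄,α)` : the algebra of
`K`-valued functions on `V` which are restrictions of polynomial functions. -/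
def fnRing (α : Q.I → ℕ) (V : Set (Q.Rep K α)) : Subalgebra K (↥V → K) :=
  (MvPolynomial.aeval
    (fun c : Q.Coords α => fun v : ↥V => v.1 c.1 c.2.1 c.2.2) :
    MvPolynomial (Q.Coords α) K →ₐ[K] (↥V → K)).range

end WithField

end FinQuiver

/-- The subalgebra of functions invariant under a relation (e.g. the orbit
relation of a group action). -/
def relInv (K : Type) [Field K] {V : Type} (R : V → V → Prop) :
    Subalgebra K (V → K) where
  carrier := {f | ∀ x y : V, R x y → f x = f y}
  mul_mem' := by
    intro f g hf hg x y hxy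
    simp only [Pi.mul_apply, hf x y hxy, hg x y hxy]
  one_mem' := fun x y _ => rfl
  add_mem' := by
    intro f g hf hg x y hxy
    simp only [Pi.add_apply, hf x y hxy, hg x y hxy]
  zero_mem' := fun x y _ => rfl
  algebraMap_mem' := fun c x y _ => rfl

namespace FinQuiver

variable (Q : FinQuiver) (K : Type) [Field K]

/-- The coordinate ring of the Marsden–Weinstein reduction
`N(λ,α) = μ_α^{-1}(λ) ⫽ G(α)` : the `G(α)`-invariant functions in the coordinate
ring of `μ_α^{-1}(λ)`.  Two such reductions are isomorphic as (affine) varieties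
exactly when these `K`-algebras are isomorphic. -/
def InvRing (l : Q.I → K) (α : Q.I → ℕ) :
    Subalgebra K (↥(Q.MomentFiber K l α) → K) :=
  Q.fnRing K α (Q.MomentFiber K l α) ⊓
    relInv K (fun x y : ↥(Q.MomentFiber K l α) =>
      ∃ g : Q.Gl K α, y.1 = Q.glAct K α g x.1)

/-- Index type for a product `∏_t X_t^{m_t}`. -/
@[reducible] def SymIdx (s : ℕ) (m : Fin s → ℕ) : Type := Σ t : Fin s, Fin (m t)

/-- The product `∏_{t} Rep(Q̄, d_t)^{m_t}` of representation spaces. -/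
def SymRep (s : ℕ) (m : Fin s → ℕ) (d : Fin s → (Q.I → ℕ)) : Type :=
  ∀ p : SymIdx s m, Q.Rep K (d p.1)

/-- The product `∏_t μ_{d_t}^{-1}(λ)^{m_t}` of moment map fibres. -/
def SymFiber (s : ℕ) (m : Fin s → ℕ) (d : Fin s → (Q.I → ℕ)) (l : Q.I → K) :
    Set (Q.SymRep K s m d) :=
  {x | ∀ p : SymIdx s m, x p ∈ Q.MomentFiber K l (d p.1)}

/-- Polynomial functions on the product of fibres. -/
def symFnRing (s : ℕ) (m : Fin s → ℕ) (d : Fin s → (Q.I → ℕ)) (l : Q.I → K) :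
    Subalgebra K (↥(Q.SymFiber K s m d l) → K) :=
  (MvPolynomial.aeval
    (fun c : Σ p : SymIdx s m, Q.Coords (d p.1) =>
      fun v : ↥(Q.SymFiber K s m d l) => v.1 c.1 c.2.1 c.2.2.1 c.2.2.2) :
    MvPolynomial (Σ p : SymIdx s m, Q.Coords (d p.1)) K →ₐ[K]
      (↥(Q.SymFiber K s m d l) → K)).range

/-- The componentwise action of the product of the groups `∏ GL(d_t)^{m_t}`. -/
def symGlAct (s : ℕ) (m : Fin s → ℕ) (d : Fin s → (Q.I → ℕ))
    (g : ∀ p : SymIdx s m, Q.Gl K (d p.1)) (x : Q.SymRep K s m d) :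
    Q.SymRep K s m d :=
  fun p => Q.glAct K (d p.1) (g p) (x p)

/-- The action of `∏_t S_{m_t}` permuting the factors of each `X_t^{m_t}`. -/
def symPermAct (s : ℕ) (m : Fin s → ℕ) (d : Fin s → (Q.I → ℕ))
    (π : ∀ t : Fin s, Equiv.Perm (Fin (m t))) (x : Q.SymRep K s m d) :
    Q.SymRep K s m d :=
  fun p => x ⟨p.1, π p.1 p.2⟩

/-- The coordinate ring of the product of symmetric products
`∏_t S^{m_t} N(λ, d_t)` of Marsden–Weinstein reductions: functions on
`∏_t μ_{d_t}^{-1}(λ)^{m_t}` which are polynomial, invariant under all the groups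
`G(d_t)` acting on the separate factors, and symmetric under permutations of the
`m_t` factors of each type `t`. -/
def SymInvRing (s : ℕ) (m : Fin s → ℕ) (d : Fin s → (Q.I → ℕ)) (l : Q.I → K) :
    Subalgebra K (↥(Q.SymFiber K s m d l) → K) :=
  Q.symFnRing K s m d l ⊓
    relInv K (fun x y : ↥(Q.SymFiber K s m d l) =>
      ∃ g : ∀ p : SymIdx s m, Q.Gl K (d p.1), y.1 = Q.symGlAct K s m d g x.1) ⊓
    relInv K (fun x y : ↥(Q.SymFiber K s m d l) =>
      ∃ π : ∀ t : Fin s, Equiv.Perm (Fin (m t)), y.1 = Q.symPermAct K s m d π x.1)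

/-- The trace function `tr_p` of an oriented cycle `p` in `Q̄` :
`tr_p(x) = tr(x_{a_1} ⋯ x_{a_ℓ})`, written out via matrix entries. -/
def cycTr (α : Q.I → ℕ) (p : Q.Cyc) (x : Q.Rep K α) : K :=
  ∑ c : ∀ i : Fin (p.n + 1), Fin (α (Q.dh (p.ar i))),
    ∏ i : Fin (p.n + 1),
      x (p.ar i) (c i) (Fin.cast (congrArg α (p.compat i)).symm (c (i + 1)))

/-- `U` is a subrepresentation of the `Π^λ`-module given by the point
`x ∈ Rep(Q̄,α)` : a collection of subspaces stable under all the maps `x_a`. -/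
def SubRep (α : Q.I → ℕ) (x : Q.Rep K α)
    (U : ∀ i : Q.I, Submodule K (Fin (α i) → K)) : Prop :=
  ∀ a : Q.DA, ∀ v ∈ U (Q.dt a), (x a).mulVec v ∈ U (Q.dh a)

/-- The module given by `x` has the simple module `S_{i₀}` (dimension vector
`ε_{i₀}`, all arrows acting as zero) as a composition factor: it has a subquotient
of dimension vector `ε_{i₀}` on which all arrows act as zero. -/
def HasSFactor (α : Q.I → ℕ) (i0 : Q.I) (x : Q.Rep K α) : Prop :=
  ∃ U W : ∀ i : Q.I, Submodule K (Fin (α i) → K),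
    Q.SubRep K α x U ∧ Q.SubRep K α x W ∧ (∀ i, U i ≤ W i) ∧
    (∀ i, Module.finrank K (W i) =
      Module.finrank K (U i) + (if i = i0 then 1 else 0)) ∧
    (∀ a : Q.DA, Q.dh a = i0 → Q.dt a = i0 →
      ∀ v ∈ W (Q.dt a), (x a).mulVec v ∈ U (Q.dh a))

/-- `W/U` is a simple subquotient of the module given by `x`; the simple
subquotients of a module are, up to isomorphism, exactly its composition factors. -/
def SimpleSubquot (α : Q.I → ℕ) (x : Q.Rep K α)
    (U W : ∀ i : Q.I, Submodule K (Fin (α i) → K)) : Prop :=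
  Q.SubRep K α x U ∧ Q.SubRep K α x W ∧ (∀ i, U i ≤ W i) ∧ U ≠ W ∧
    ∀ V : ∀ i : Q.I, Submodule K (Fin (α i) → K),
      Q.SubRep K α x V → (∀ i, U i ≤ V i) → (∀ i, V i ≤ W i) → V = U ∨ V = W

/-- The direct sum map `∏_{j=1}^m Rep(Q̄,δ) → Rep(Q̄,mδ)` (block diagonal). -/
def dsMap (δ : Q.I → ℕ) (m : ℕ) (y : Fin m → Q.Rep K δ) :
    Q.Rep K (fun i => m * δ i) :=
  fun a => Matrix.of fun r c =>
    if (finProdFinEquiv.symm r).1 = (finProdFinEquiv.symm c).1 then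
      y (finProdFinEquiv.symm r).1 a (finProdFinEquiv.symm r).2
        (finProdFinEquiv.symm c).2
    else 0

end FinQuiver


namespace FinQuiver

theorem bil_add_left (Q : FinQuiver) (x y z : Q.I → ℤ) :
    Q.bil (x + y) z = Q.bil x z + Q.bil y z := by
  simp only [bil, Pi.add_apply, mul_add, add_mul, Finset.sum_add_distrib]
  ring

theorem bil_neg_left (Q : FinQuiver) (x z : Q.I → ℤ) :
    Q.bil (-x) z = - Q.bil x z := by
  have h := Q.bil_add_left x (-x) z
  have h0 : Q.bil 0 z = 0 := by simp [bil]
  rw [add_neg_cancel, h0] at h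
  linarith

theorem bil_comm (Q : FinQuiver) (x y : Q.I → ℤ) : Q.bil x y = Q.bil y x := by
  simp only [bil, Fintype.sum_sum_type]
  have h1 : ∑ i, 2 * x i * y i = ∑ i, 2 * y i * x i :=
    Finset.sum_congr rfl fun i _ => by ring
  have h2 : ∑ a, x (Q.h a) * y (Q.t a) = ∑ a, y (Q.t a) * x (Q.h a) :=
    Finset.sum_congr rfl fun i _ => by ring
  have h3 : ∑ a, x (Q.t a) * y (Q.h a) = ∑ a, y (Q.h a) * x (Q.t a) :=
    Finset.sum_congr rfl fun i _ => by ring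
  rw [h1, h2, h3]
  ring

theorem bil_add_right (Q : FinQuiver) (x y z : Q.I → ℤ) :
    Q.bil z (x + y) = Q.bil z x + Q.bil z y := by
  rw [bil_comm, bil_add_left, bil_comm Q x, bil_comm Q y]

theorem bil_neg_right (Q : FinQuiver) (x z : Q.I → ℤ) :
    Q.bil z (-x) = - Q.bil z x := by
  rw [bil_comm, bil_neg_left, bil_comm]

theorem bil_zero_right (Q : FinQuiver) (z : Q.I → ℤ) : Q.bil z 0 = 0 := by
  simp [bil]

theorem bil_self_even (Q : FinQuiver) (x : Q.I → ℤ) : ∃ k, Q.bil x x = 2 * k := by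
  refine ⟨(∑ i, x i * x i) - ∑ a, x (Q.h a) * x (Q.t a), ?_⟩
  simp only [bil, Fintype.sum_sum_type]
  have h1 : ∑ i, 2 * x i * x i = 2 * ∑ i, x i * x i := by
    rw [Finset.mul_sum]; exact Finset.sum_congr rfl fun i _ => by ring
  have h3 : ∑ a, x (Q.t a) * x (Q.h a) = ∑ a, x (Q.h a) * x (Q.t a) :=
    Finset.sum_congr rfl fun i _ => by ring
  rw [h1, h3]
  ring

theorem two_le_bil (Q : FinQuiver) (hQ : Q.PosDef) (x : Q.I → ℤ) (hx : x ≠ 0) :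
    2 ≤ Q.bil x x := by
  obtain ⟨k, hk⟩ := Q.bil_self_even x
  have h1 := hQ.1 x
  have h2 : Q.bil x x ≠ 0 := fun h => hx (hQ.2 x h)
  omega

theorem ev_ne_zero (Q : FinQuiver) (i : Q.I) : Q.ev i ≠ 0 := fun h => by
  have := congrFun h i
  simp [ev] at this

theorem bil_ev (Q : FinQuiver) (i : Q.I) : Q.bil (Q.ev i) (Q.ev i) =
    2 - 2 * ∑ a, Q.ev i (Q.h a) * Q.ev i (Q.t a) := by
  simp only [bil, Fintype.sum_sum_type]
  have h1 : ∑ j, 2 * Q.ev i j * Q.ev i j = 2 := by simp [ev]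
  have h3 : ∑ a, Q.ev i (Q.t a) * Q.ev i (Q.h a) = ∑ a, Q.ev i (Q.h a) * Q.ev i (Q.t a) :=
    Finset.sum_congr rfl fun i _ => by ring
  rw [h1, h3]
  ring

theorem ev_nonneg (Q : FinQuiver) (i j : Q.I) : 0 ≤ Q.ev i j := by
  unfold ev; split_ifs <;> simp

theorem bil_ev_self (Q : FinQuiver) (hQ : Q.PosDef) (i : Q.I) :
    Q.bil (Q.ev i) (Q.ev i) = 2 := by
  have h := Q.two_le_bil hQ _ (Q.ev_ne_zero i)
  have h0 : 0 ≤ ∑ a, Q.ev i (Q.h a) * Q.ev i (Q.t a) :=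
    Finset.sum_nonneg fun a _ => mul_nonneg (Q.ev_nonneg _ _) (Q.ev_nonneg _ _)
  have h1 := Q.bil_ev i
  omega

theorem loopfree (Q : FinQuiver) (hQ : Q.PosDef) (i : Q.I) : Q.Loopfree i := by
  rintro a ⟨h1, h2⟩
  have h := Q.bil_ev i
  rw [Q.bil_ev_self hQ] at h
  have h3 : Q.ev i (Q.h a) * Q.ev i (Q.t a) ≤ ∑ a, Q.ev i (Q.h a) * Q.ev i (Q.t a) :=
    Finset.single_le_sum (f := fun a => Q.ev i (Q.h a) * Q.ev i (Q.t a))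
      (fun a _ => mul_nonneg (Q.ev_nonneg _ _) (Q.ev_nonneg _ _)) (Finset.mem_univ a)
  simp only [h1, h2, ev, if_true] at h3
  simp only [ev] at h
  omega

theorem eq_sum_ev (Q : FinQuiver) (x : Q.I → ℤ) : x = ∑ i, x i • Q.ev i := by
  ext j
  simp [ev, Finset.sum_apply]

theorem bil_sum_ev (Q : FinQuiver) (x y : Q.I → ℤ) :
    Q.bil x y = ∑ i, y i * Q.bil x (Q.ev i) := by
  let f : (Q.I → ℤ) →+ ℤ := AddMonoidHom.mk' (Q.bil x) (fun a b => Q.bil_add_right a b x)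
  have h : f y = ∑ i, y i * f (Q.ev i) := by
    conv_lhs => rw [Q.eq_sum_ev y]
    rw [map_sum]
    exact Finset.sum_congr rfl fun i _ => by rw [map_zsmul, smul_eq_mul]
  exact h

/-- Nonnegative vectors of norm two are roots. -/
theorem isRoot_of_norm (Q : FinQuiver) (hQ : Q.PosDef) : ∀ (n : ℕ) (x : Q.I → ℤ),
    (∀ i, 0 ≤ x i) → Q.bil x x = 2 → ∑ i, x i = n → Q.IsRoot x := by
  intro n
  induction n with
  | zero =>
    intro x hx h2 hs
    exfalso
    have : x = 0 := by
      ext i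
      exact (Finset.sum_eq_zero_iff_of_nonneg (fun i _ => hx i)).1 (by simpa using hs) i
        (Finset.mem_univ i)
    rw [this, bil_zero_right] at h2
    omega
  | succ n ih =>
    intro x hx h2 hs
    have hex : ∃ i, 0 < x i * Q.bil x (Q.ev i) := by
      by_contra hcon
      push Not at hcon
      have := Finset.sum_nonpos fun i (_ : i ∈ Finset.univ) => hcon i
      rw [← bil_sum_ev] at this
      omega
    obtain ⟨i, hi⟩ := hex
    have hb : 0 < Q.bil x (Q.ev i) := pos_of_mul_pos_right hi (hx i)
    have hxi : 0 < x i := lt_of_le_of_ne (hx i) fun h => by rw [← h] at hi; simp at hi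
    by_cases hxe : x = Q.ev i
    · rw [hxe]; exact IsRoot.simple i (Q.loopfree hQ i)
    have hy : x + -Q.ev i ≠ 0 := fun h => hxe (add_neg_eq_zero.1 h)
    have hyn := Q.two_le_bil hQ _ hy
    have hee := Q.bil_ev_self hQ i
    have hexp : Q.bil (x + -Q.ev i) (x + -Q.ev i) = 4 - 2 * Q.bil x (Q.ev i) := by
      simp only [bil_add_left, bil_add_right, bil_neg_left, bil_neg_right]
      rw [Q.bil_comm (Q.ev i) x, h2, hee]; ring
    have hb1 : Q.bil x (Q.ev i) = 1 := by omega
    have hroot : Q.IsRoot (x + -Q.ev i) := by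
      refine ih _ ?_ (by omega) ?_
      · intro j
        have := hx j
        simp only [Pi.add_apply, Pi.neg_apply, ev]
        split_ifs with hj
        · subst hj; omega
        · omega
      · have : ∑ j, Q.ev i j = 1 := by simp [ev]
        simp only [Pi.add_apply, Pi.neg_apply, Finset.sum_add_distrib, Finset.sum_neg_distrib,
          this, hs]
        push_cast; ring
    have := IsRoot.reflect i (Q.loopfree hQ i) _ hroot
    have heq : Q.refl i (x + -Q.ev i) = x := by
      unfold refl
      rw [bil_add_left, bil_neg_left, hee, hb1]
      simp
    rwa [heq] at this

/-- The pairing of the positive and negative parts is nonpositive. -/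
theorem bil_disjoint (Q : FinQuiver) (x y : Q.I → ℤ) (hx : ∀ i, 0 ≤ x i) (hy : ∀ i, 0 ≤ y i)
    (hxy : ∀ i, x i * y i = 0) : Q.bil x y ≤ 0 := by
  unfold bil
  have h1 : ∑ i, 2 * x i * y i = 0 :=
    Finset.sum_eq_zero fun i _ => by rw [mul_assoc, hxy, mul_zero]
  have h2 : 0 ≤ ∑ a : Q.DA, x (Q.dh a) * y (Q.dt a) :=
    Finset.sum_nonneg fun a _ => mul_nonneg (hx _) (hy _)
  omega

theorem pos_or_neg (Q : FinQuiver) (hQ : Q.PosDef) (x : Q.I → ℤ) (h2 : Q.bil x x = 2) :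
    (∀ i, 0 ≤ x i) ∨ (∀ i, 0 ≤ (-x) i) := by
  let p : Q.I → ℤ := fun i => max (x i) 0
  let m : Q.I → ℤ := fun i => max (-x i) 0
  have hp : ∀ i, 0 ≤ p i := fun i => le_max_right _ _
  have hm : ∀ i, 0 ≤ m i := fun i => le_max_right _ _
  have hpm : ∀ i, p i * m i = 0 := fun i => by
    simp only [p, m]
    rcases le_total (x i) 0 with h | h
    · rw [max_eq_right h, zero_mul]
    · rw [max_eq_right (a := -x i) (by omega), mul_zero]
  have hx : x = p + -m := by
    ext i
    simp only [p, m, Pi.add_apply, Pi.neg_apply]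
    omega
  have hd := Q.bil_disjoint p m hp hm hpm
  have hexp : Q.bil x x = Q.bil p p + Q.bil m m - 2 * Q.bil p m := by
    conv_lhs => rw [hx]
    simp only [bil_add_left, bil_add_right, bil_neg_left, bil_neg_right]
    rw [Q.bil_comm m p]; ring
  by_cases hp0 : p = 0
  · right; intro i; rw [hx, hp0]; simpa using hm i
  by_cases hm0 : m = 0
  · left; intro i; rw [hx, hm0]; simpa using hp i
  have h3 := Q.two_le_bil hQ p hp0
  have h4 := Q.two_le_bil hQ m hm0
  omega

theorem isPosRoot_of_norm (Q : FinQuiver) (hQ : Q.PosDef) (x : Q.I → ℤ)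
    (h2 : Q.bil x x = 2) (hx : ∀ i, 0 ≤ x i) : Q.IsPosRoot x := by
  refine ⟨Q.isRoot_of_norm hQ (∑ i, x i).toNat x hx h2 ?_, hx, ?_⟩
  · rw [Int.toNat_of_nonneg (Finset.sum_nonneg fun i _ => hx i)]
  · rintro rfl
    rw [bil_zero_right] at h2; omega

theorem exists_multiset (Q : FinQuiver) (hQ : Q.PosDef) (x : Q.I → ℤ) :
    ∃ s : Multiset (Q.I → ℤ), (∀ y ∈ s, Q.bil y y = 2) ∧ s.sum = x := by
  apply AddSubmonoid.exists_multiset_of_mem_closure (s := {y | Q.bil y y = 2})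
  rw [Q.eq_sum_ev x]
  refine AddSubmonoid.sum_mem _ fun i _ => ?_
  have h1 : Q.ev i ∈ AddSubmonoid.closure {y | Q.bil y y = 2} :=
    AddSubmonoid.subset_closure (Q.bil_ev_self hQ i)
  have h2 : -Q.ev i ∈ AddSubmonoid.closure {y | Q.bil y y = 2} :=
    AddSubmonoid.subset_closure (by
      show Q.bil _ _ = 2
      rw [bil_neg_left, bil_neg_right, Q.bil_ev_self hQ i]; rfl)
  obtain ⟨n, hn | hn⟩ := Int.eq_nat_or_neg (x i)
  · rw [hn, natCast_zsmul]; exact AddSubmonoid.nsmul_mem _ h1 n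
  · rw [hn, neg_smul, natCast_zsmul, ← smul_neg]; exact AddSubmonoid.nsmul_mem _ h2 n

theorem eq_zero_of_bounded (Q : FinQuiver) (hQ : Q.PosDef) (x : Q.I → ℤ)
    (hb : ∀ y, Q.bil y y = 2 → Q.bil x y ≤ 1) :
    ∀ (n : ℕ) (s : Multiset (Q.I → ℤ)), s.card = n → (∀ y ∈ s, Q.bil y y = 2) →
      s.sum = x → x = 0 := by
  intro n
  induction n using Nat.strong_induction_on with
  | _ n ih =>
  intro s hn hs hsum
  rcases s.empty_or_exists_mem with rfl | ⟨g, hg⟩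
  · simpa using hsum.symm
  obtain ⟨r, rfl⟩ := Multiset.exists_cons_of_mem hg
  have hgg := hs g hg
  have hex : ∃ y ∈ r, Q.bil y g < 0 := by
    by_contra hcon
    push Not at hcon
    have h1 : 0 ≤ Q.bil r.sum g := by
      let f : (Q.I → ℤ) →+ ℤ :=
        AddMonoidHom.mk' (fun z => Q.bil z g) (fun a b => Q.bil_add_left a b g)
      have hf : f r.sum = (r.map f).sum := map_multiset_sum f r
      have h2 : 0 ≤ (r.map f).sum := by
        apply Multiset.sum_nonneg
        intro z hz
        obtain ⟨y, hy, rfl⟩ := Multiset.mem_map.1 hz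
        exact hcon y hy
      rw [← hf] at h2
      exact h2
    have h3 := hb g hgg
    rw [← hsum, Multiset.sum_cons, bil_add_left] at h3
    omega
  obtain ⟨y, hy, hyg⟩ := hex
  obtain ⟨r, rfl⟩ := Multiset.exists_cons_of_mem hy
  have hyy := hs y (by simp)
  simp only [Multiset.card_cons] at hn
  have hexp : Q.bil (g + y) (g + y) = 4 + 2 * Q.bil y g := by
    simp only [bil_add_left, bil_add_right]
    rw [Q.bil_comm g y, hgg, hyy]; ring
  by_cases h0 : g + y = 0
  · refine ih r.card (by omega) r rfl (fun z hz => hs z (by simp [hz])) ?_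
    rw [← hsum, Multiset.sum_cons, Multiset.sum_cons, ← add_assoc, h0, zero_add]
  · have := Q.two_le_bil hQ _ h0
    refine ih _ (by omega) ((g + y) ::ₘ r) (Multiset.card_cons _ _) ?_ ?_
    · intro z hz
      rcases Multiset.mem_cons.1 hz with rfl | hz
      · omega
      · exact hs z (by simp [hz])
    · rw [← hsum, Multiset.sum_cons, Multiset.sum_cons, Multiset.sum_cons, add_assoc]

end FinQuiver

/-- for a Dynkin quiver there is no nonzero vector `α ∈ ℤ^{I°}` with
`−1 ≤ (α,η) ≤ 0` for all positive roots `η`. -/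
theorem stmt17 (Q : FinQuiver) (hQ : Q.IsDynkin) (α : Q.I → ℤ) (hα : α ≠ 0) :
    ¬ ∀ η : Q.I → ℤ, Q.IsPosRoot η → -1 ≤ Q.bil α η ∧ Q.bil α η ≤ 0 := by
  intro hall
  refine hα ?_
  obtain ⟨s, hs, hsum⟩ := Q.exists_multiset hQ.2 α
  refine Q.eq_zero_of_bounded hQ.2 α ?_ _ s rfl hs hsum
  intro y hy
  rcases Q.pos_or_neg hQ.2 y hy with h | h
  · have := hall y (Q.isPosRoot_of_norm hQ.2 y hy h)
    omega
  · have hy2 : Q.bil (-y) (-y) = 2 := by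
      rw [FinQuiver.bil_neg_left, FinQuiver.bil_neg_right, hy]; rfl
    have := hall (-y) (Q.isPosRoot_of_norm hQ.2 (-y) hy2 h)
    rw [FinQuiver.bil_neg_right] at this
    omega


end
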